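/- Let M, K, N_UE be positive integers, N = K·N_UE, and σ > 0 a real number. For k = 1, …, K let H_k ∈ ℂ^{M×N_UE}, assume the spatial-orthogonality condition H_kᴴ H_j = 0 for all k ≠ j, and let H = [H_1, …, H_K] ∈ ℂ^{M×N} be their horizontal concatenation. Define the LMMSE Gram matrix A = Hᴴ H + σ² I_N (which is Hermitian positive definite). Let L = c·N_UE for a positive integer c such that d = N/L is a positive integer; let P_d ∈ ℂ^{N×N} be the block diagonal matrix consisting of the d consecutive L×L diagonal blocks of A (with all entries outside these blocks set to zero), let M_d = P_d⁻¹, and let Ā = M_d^{1/2} A M_d^{1/2}, where M_d^{1/2} is the Hermitian positive definite square root of M_d. Then Ā = I_N, so κ(Ā) = 1; and if A is not a scalar multiple of I_N, then κ(Ā) < κ(A), where κ(B) = ‖B‖₂‖B⁻¹‖₂. -/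

import Mathlib

open scoped ComplexOrder

/-- The spectral norm (largest singular value) of a complex matrix, realized as the
operator norm of the induced linear map between Euclidean spaces. -/
noncomputable def specNorm {m n : Type*} [Fintype m] [Fintype n] [DecidableEq n]
    (B : Matrix m n ℂ) : ℝ :=
  ‖LinearMap.toContinuousLinearMap (Matrix.toEuclideanLin B)‖

/-! Orthogonality of columns in different blocks makes `Hᴴ H`, and hence `A = Hᴴ H + σ² I`, block
diagonal: the block-Jacobi preconditioner is the exact inverse of `A`, so the preconditioned matrix
is the identity. On the other hand, the spectrum of a positive invertible `a` lies in the interval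
`[‖a⁻¹‖⁻¹, ‖a‖]`, which shrinks to a point as soon as `‖a‖ * ‖a⁻¹‖ ≤ 1`; then `a` is a scalar. -/

open Matrix

theorem one_le_norm_mul_norm_inv_of_mem_spectrum {𝕜 A : Type*} [NormedField 𝕜] [NormedRing A]
    [NormedAlgebra 𝕜 A] [CompleteSpace A] [NormOneClass A] {a : Aˣ} {x : 𝕜}
    (hx : x ∈ spectrum 𝕜 (a : A)) : 1 ≤ ‖x‖ * ‖(↑a⁻¹ : A)‖ := by
  have hx0 : x ≠ 0 := spectrum.ne_zero_of_mem_of_unit hx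
  have hinv : x⁻¹ ∈ spectrum 𝕜 (↑a⁻¹ : A) :=
    spectrum.inv_mem_iff (r := Units.mk0 x hx0).mp hx
  have hle : ‖x‖⁻¹ ≤ ‖(↑a⁻¹ : A)‖ := norm_inv x ▸ spectrum.norm_le_norm_of_mem hinv
  exact (inv_le_iff_one_le_mul₀' (norm_pos_iff.mpr hx0)).mp hle

section CStarAlgebra

variable {A : Type*} [CStarAlgebra A] [PartialOrder A] [StarOrderedRing A] {a : Aˣ}

theorem eq_algebraMap_norm_of_norm_mul_norm_inv_le_one (ha : 0 ≤ (a : A))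
    (h : ‖(a : A)‖ * ‖(↑a⁻¹ : A)‖ ≤ 1) : (a : A) = algebraMap ℝ A ‖(a : A)‖ := by
  nontriviality A
  refine CFC.eq_algebraMap_of_spectrum_subset_singleton (R := ℝ) (a : A) _ fun x hx ↦ ?_
  have hx0 : 0 ≤ x := spectrum_nonneg_of_nonneg ha hx
  have hxa : x ≤ ‖(a : A)‖ := (le_abs_self x).trans (spectrum.norm_le_norm_of_mem hx)
  have hinv : 1 ≤ x * ‖(↑a⁻¹ : A)‖ := by
    simpa only [Real.norm_of_nonneg hx0] using one_le_norm_mul_norm_inv_of_mem_spectrum hx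
  have hax : ‖(a : A)‖ ≤ x :=
    calc ‖(a : A)‖ ≤ ‖(a : A)‖ * (x * ‖(↑a⁻¹ : A)‖) := le_mul_of_one_le_right (norm_nonneg _) hinv
      _ = x * (‖(a : A)‖ * ‖(↑a⁻¹ : A)‖) := mul_left_comm _ _ _
      _ ≤ x := mul_le_of_le_one_right hx0 h
  exact le_antisymm hxa hax

theorem one_lt_norm_mul_norm_inv (ha : 0 ≤ (a : A)) (hne : ∀ r : ℝ, (a : A) ≠ algebraMap ℝ A r) :
    1 < ‖(a : A)‖ * ‖(↑a⁻¹ : A)‖ :=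
  lt_of_not_ge fun h ↦ hne _ (eq_algebraMap_norm_of_norm_mul_norm_inv_le_one ha h)

end CStarAlgebra

section ConditionNumber

open scoped Matrix.Norms.L2Operator MatrixOrder

variable {m n : Type*} [Fintype m] [Fintype n] [DecidableEq n]

/-- The spectral condition number `κ(B) = ‖B‖₂ ‖B⁻¹‖₂` of a square complex matrix. It is `0` for
singular `B`, whose `Matrix` inverse is `0`. -/
noncomputable def conditionNumber (B : Matrix n n ℂ) : ℝ :=
  specNorm B * specNorm B⁻¹

theorem specNorm_eq_l2_opNorm (B : Matrix m n ℂ) : specNorm B = ‖B‖ :=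
  rfl

theorem conditionNumber_one [Nonempty n] : conditionNumber (1 : Matrix n n ℂ) = 1 := by
  simp only [conditionNumber, specNorm_eq_l2_opNorm, inv_one, norm_one, mul_one]

theorem one_lt_conditionNumber {A : Matrix n n ℂ} (hA : A.PosDef)
    (hne : ∀ r : ℝ, A ≠ (r : ℂ) • 1) : 1 < conditionNumber A := by
  obtain ⟨a, rfl⟩ := hA.isUnit
  have hscalar (r : ℝ) : (a : Matrix n n ℂ) ≠ algebraMap ℝ (Matrix n n ℂ) r := by
    simpa only [Algebra.algebraMap_eq_smul_one, Complex.coe_smul] using hne r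
  simpa only [conditionNumber, specNorm_eq_l2_opNorm, coe_units_inv] using
    one_lt_norm_mul_norm_inv hA.posSemidef.nonneg hscalar

end ConditionNumber

section BlockDiagonalPart

variable {n α R : Type*} [DecidableEq α] [Zero R]

/-- The block diagonal part of a square matrix, whose blocks are the fibres of the labelling `b` of
the indices. -/
def blockDiagonalPart (b : n → α) (A : Matrix n n R) : Matrix n n R :=
  of fun i j ↦ if b i = b j then A i j else 0

theorem blockDiagonalPart_eq_self {b : n → α} {A : Matrix n n R}
    (hA : ∀ i j, b i ≠ b j → A i j = 0) : blockDiagonalPart b A = A := by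
  ext i j
  exact ite_eq_left_iff.mpr fun hij ↦ (hA i j hij).symm

end BlockDiagonalPart

theorem mul_mul_eq_one_of_mul_self_eq_inv {n R : Type*} [Fintype n] [DecidableEq n] [CommRing R]
    {A S : Matrix n n R} (hA : IsUnit A) (hS : S * S = A⁻¹) : S * A * S = 1 := by
  rw [mul_eq_one_comm, ← mul_assoc, hS, nonsing_inv_mul A ((isUnit_iff_isUnit_det A).mp hA)]

section LmmseGram

variable {m n 𝕜 : Type*} [Fintype m] [DecidableEq n] [RCLike 𝕜]

/-- The LMMSE Gram matrix `Hᴴ H + σ² I` of a channel matrix `H` under noise variance `σ²`. -/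
def lmmseGram (H : Matrix m n 𝕜) (σ : ℝ) : Matrix n n 𝕜 :=
  Hᴴ * H + (σ ^ 2 : 𝕜) • 1

theorem posDef_lmmseGram [Finite n] (H : Matrix m n 𝕜) {σ : ℝ} (hσ : σ ≠ 0) :
    (lmmseGram H σ).PosDef := by
  have hσ2 : (0 : 𝕜) < (σ : 𝕜) ^ 2 := by exact_mod_cast sq_pos_of_ne_zero hσ
  exact PosDef.posSemidef_add (posSemidef_conjTranspose_mul_self H) (PosDef.one.smul hσ2)

theorem lmmseGram_apply_of_ne (H : Matrix m n 𝕜) (σ : ℝ) {i j : n} (hij : i ≠ j) :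
    lmmseGram H σ i j = (Hᴴ * H) i j := by
  simp only [lmmseGram, Matrix.add_apply, Matrix.smul_apply, one_apply_ne hij, smul_zero, add_zero]

theorem blockDiagonalPart_lmmseGram {α : Type*} [DecidableEq α] {H : Matrix m n 𝕜} {b : n → α}
    (σ : ℝ) (horth : ∀ i j, b i ≠ b j → (Hᴴ * H) i j = 0) :
    blockDiagonalPart b (lmmseGram H σ) = lmmseGram H σ :=
  blockDiagonalPart_eq_self fun i j hij ↦
    (lmmseGram_apply_of_ne H σ (ne_of_apply_ne b hij)).trans (horth i j hij)

end LmmseGram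

/-- The horizontal concatenation `[H₁, …, H_K]` of a family of matrices: the column `(k, a)` is the
column `a` of `H k`. -/
def hconcat {ι m n R : Type*} (H : ι → Matrix m n R) : Matrix m (ι × n) R :=
  of fun i p ↦ H p.1 i p.2

theorem conjTranspose_mul_self_hconcat_apply_eq_zero {ι m n R : Type*} [Fintype m]
    [NonUnitalNonAssocSemiring R] [Star R] {H : ι → Matrix m n R}
    (horth : ∀ k j, k ≠ j → (H k)ᴴ * H j = 0) {p q : ι × n} (hpq : p.1 ≠ q.1) :
    ((hconcat H)ᴴ * hconcat H) p q = 0 :=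
  congr_fun₂ (horth p.1 q.1 hpq) p.2 q.2

theorem block_jacobi_preconditioned_condition_number_general {m n α : Type*} [Fintype m]
    [Fintype n] [DecidableEq n] [Nonempty n] [DecidableEq α] {H : Matrix m n ℂ} {b : n → α}
    (horth : ∀ i j, b i ≠ b j → (Hᴴ * H) i j = 0) {σ : ℝ} (hσ : σ ≠ 0) {A Pd S : Matrix n n ℂ}
    (hA : A = lmmseGram H σ) (hPd : Pd = blockDiagonalPart b A) (hS : S * S = Pd⁻¹) :
    S * A * S = 1 ∧
    conditionNumber (S * A * S) = 1 ∧
    ((∀ μ : ℂ, A ≠ μ • 1) → conditionNumber (S * A * S) < conditionNumber A) := by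
  have hApos : A.PosDef := hA ▸ posDef_lmmseGram H hσ
  have hPA : Pd = A := by rw [hPd, hA, blockDiagonalPart_lmmseGram σ horth]
  have hSAS : S * A * S = 1 := mul_mul_eq_one_of_mul_self_eq_inv hApos.isUnit (hPA ▸ hS)
  rw [hSAS, conditionNumber_one]
  exact ⟨rfl, rfl, fun hne ↦ one_lt_conditionNumber hApos fun r ↦ hne r⟩

/-- **Block-Jacobi preconditioning of the LMMSE Gram matrix under spatial
orthogonality.**  Users `k = 1, …, K` have channels `Hk k ∈ ℂ^{M×N_UE}` with
`(Hk k)ᴴ (Hk j) = 0` for `k ≠ j`; `H` is their horizontal concatenation (columns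
indexed by `Fin K × Fin NUE` in user-major order) and `A = Hᴴ H + σ² I` is the LMMSE
Gram matrix.  The block-Jacobi preconditioner uses block size `L = c·NUE` with `c ∣ K`
(so `d = N/L` is a positive integer): `Pd` is the block diagonal part of `A` obtained
by keeping the `d` consecutive `L×L` diagonal blocks (columns `(k,a)`, `(k',a')` lie in
the same block iff `⌊k/c⌋ = ⌊k'/c⌋`), `M_d = Pd⁻¹`, and `S = M_d^{1/2}` is its
Hermitian positive definite square root.  Then `Ā = S A S = I`, so `κ(Ā) = 1`; and if
`A` is not a scalar multiple of `I`, then `κ(Ā) < κ(A)`, where `κ(B) = ‖B‖₂‖B⁻¹‖₂`. -/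
theorem block_jacobi_preconditioned_condition_number
    (M K NUE c : ℕ) (hM : 0 < M) (hK : 0 < K) (hNUE : 0 < NUE)
    (hc : 0 < c) (hcK : c ∣ K) (σ : ℝ) (hσ : 0 < σ)
    (Hk : Fin K → Matrix (Fin M) (Fin NUE) ℂ)
    (horth : ∀ k j : Fin K, k ≠ j → (Hk k).conjTranspose * Hk j = 0)
    (H : Matrix (Fin M) (Fin K × Fin NUE) ℂ)
    (hH : ∀ (m : Fin M) (k : Fin K) (a : Fin NUE), H m (k, a) = Hk k m a)
    (A : Matrix (Fin K × Fin NUE) (Fin K × Fin NUE) ℂ)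
    (hA : A = H.conjTranspose * H + (σ ^ 2 : ℂ) • 1)
    (Pd : Matrix (Fin K × Fin NUE) (Fin K × Fin NUE) ℂ)
    (hPd : ∀ i i' : Fin K × Fin NUE,
      Pd i i' = if (i.1 : ℕ) / c = (i'.1 : ℕ) / c then A i i' else 0)
    (S : Matrix (Fin K × Fin NUE) (Fin K × Fin NUE) ℂ)
    (hSpd : S.PosDef) (hS : S * S = Pd⁻¹) :
    S * A * S = 1 ∧
    specNorm (S * A * S) * specNorm (S * A * S)⁻¹ = 1 ∧
    ((∀ μ : ℂ, A ≠ μ • (1 : Matrix (Fin K × Fin NUE) (Fin K × Fin NUE) ℂ)) →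
      specNorm (S * A * S) * specNorm (S * A * S)⁻¹ < specNorm A * specNorm A⁻¹) := by
  obtain rfl : H = hconcat Hk := Matrix.ext fun m p ↦ hH m p.1 p.2
  have : Nonempty (Fin K × Fin NUE) := ⟨⟨0, hK⟩, ⟨0, hNUE⟩⟩
  exact block_jacobi_preconditioned_condition_number_general (b := fun i ↦ (i.1 : ℕ) / c)
    (fun p q hpq ↦ conjTranspose_mul_self_hconcat_apply_eq_zero horth
      (ne_of_apply_ne (fun k : Fin K ↦ (k : ℕ) / c) hpq)) hσ.ne' hA (Matrix.ext hPd) hS
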